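/- Let Ω ⊂ ℝ^N be open and bounded, let F : ℝ × ℝ^N → ℝ be of class C³, let u : ℝ^N → ℝ be bounded and of class C³ with all partial derivatives up to order 3 bounded, and let η, ζ : ℝ^N → ℝ^N be bounded and of class C³ with all partial derivatives up to order 3 bounded. Define Φ_t(x) := x + t·η(x) + (t²/2)·ζ(x), let τ > 0 be such that Φ_t is a bijection of ℝ^N for |t| < τ, set u_t(y) := u(Φ_t⁻¹(y)) and 𝔄₁(t) := ∫_Ω F(u_t, ∇u_t) dy. For φ : ℝ^N → ℝ bounded C³ with bounded derivatives, define dA(u, φ) := (d/dt)|_{t=0} ∫_Ω F(u + tφ, ∇u + t∇φ) dx and d²A(u, φ) := (d²/dt²)|_{t=0} ∫_Ω F(u + tφ, ∇u + t∇φ) dx. Then 𝔄₁'(0) = dA(u, −∇u·η) and 𝔄₁''(0) = d²A(u, −∇u·η) + dA(u, X₀), where X₀ := Σ_{i,j} ∂²u/∂x_i∂x_j η^i η^j + Σ_i ∂u/∂x_i (2((η·∇)η)^i − ζ^i). -/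

import Mathlib

/-!
For small `t` the map `Φ_t` is a Lipschitz perturbation of the identity with constant less
than `1`, so the implicit function theorem makes `v(t, y) = u(Φ_t⁻¹(y))` jointly of class `C³`.
For any such path of functions, differentiating under the integral sign gives
`(A ∘ v)'(0) = dA(v, ∂ₜv)` and `(A ∘ v)''(0) = d²A(v, ∂ₜv) + dA(v, ∂ₜ²v)`, all evaluated at `t = 0`.
No formula for `Φ_t⁻¹` is needed to find the two time derivatives: differentiating
`v(t, Φ_t(x)) = u(x)` twice at `t = 0` yields `∂ₜv = -∇u·η` and `∂ₜ²v = X₀`.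
-/

open Filter MeasureTheory Topology
open scoped RealInnerProductSpace

namespace PaperAC

/-- The partial derivative `∂f/∂x_j` of a scalar function on `ℝ^N`. -/
noncomputable def pdv {N : ℕ} (f : (Fin N → ℝ) → ℝ) (j : Fin N) (x : Fin N → ℝ) : ℝ :=
  fderiv ℝ f x (Pi.single j 1)

/-- The advection field `(η·∇)η`, with components `((η·∇)η)^i = ∑_j η^j ∂η^i/∂x_j`. -/
noncomputable def advf {N : ℕ} (η : (Fin N → ℝ) → (Fin N → ℝ)) (x : Fin N → ℝ) :
    Fin N → ℝ :=
  fun i => ∑ j, η x j * pdv (fun z => η z i) j x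

/-- The gradient `∇u` of a scalar function on `ℝ^N`. -/
noncomputable def grad {N : ℕ} (u : (Fin N → ℝ) → ℝ) (x : Fin N → ℝ) : Fin N → ℝ :=
  fun i => pdv u i x

/-- `X₀ := (D²u·η, η) + (∇u, 2(η·∇)η − ζ)`. -/
noncomputable def X0 {N : ℕ} (u : (Fin N → ℝ) → ℝ) (η ζ : (Fin N → ℝ) → (Fin N → ℝ))
    (y : Fin N → ℝ) : ℝ :=
  (∑ i, ∑ j, pdv (pdv u i) j y * η y i * η y j)
    + ∑ i, pdv u i y * (2 * advf η y i - ζ y i)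

/-- `−∇u·η`. -/
noncomputable def nGradDot {N : ℕ} (u : (Fin N → ℝ) → ℝ) (η : (Fin N → ℝ) → (Fin N → ℝ))
    (x : Fin N → ℝ) : ℝ :=
  -(∑ i, pdv u i x * η x i)

/-- `F_z`, the partial derivative of `F = F(z,p)` in the scalar variable. -/
noncomputable def Fz {N : ℕ} (F : ℝ × (Fin N → ℝ) → ℝ) (z : ℝ) (p : Fin N → ℝ) : ℝ :=
  fderiv ℝ F (z, p) (1, 0)

/-- `F_{p_i}`. -/
noncomputable def Fp {N : ℕ} (F : ℝ × (Fin N → ℝ) → ℝ) (i : Fin N) (z : ℝ) (p : Fin N → ℝ) :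
    ℝ :=
  fderiv ℝ F (z, p) (0, Pi.single i 1)

/-- `F_{zz}`. -/
noncomputable def Fzz {N : ℕ} (F : ℝ × (Fin N → ℝ) → ℝ) (z : ℝ) (p : Fin N → ℝ) : ℝ :=
  fderiv ℝ (fun q => fderiv ℝ F q (1, 0)) (z, p) (1, 0)

/-- `F_{z p_i}`. -/
noncomputable def Fzp {N : ℕ} (F : ℝ × (Fin N → ℝ) → ℝ) (i : Fin N) (z : ℝ) (p : Fin N → ℝ) :
    ℝ :=
  fderiv ℝ (fun q => fderiv ℝ F q ((0 : ℝ), Pi.single i 1)) (z, p) (1, 0)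

/-- `F_{p_i p_j}`. -/
noncomputable def Fpp {N : ℕ} (F : ℝ × (Fin N → ℝ) → ℝ) (i j : Fin N) (z : ℝ)
    (p : Fin N → ℝ) : ℝ :=
  fderiv ℝ (fun q => fderiv ℝ F q ((0 : ℝ), Pi.single j 1)) (z, p) ((0 : ℝ), Pi.single i 1)

/-- `𝔄₁(t) = A(u ∘ Φ_t⁻¹) = ∫_Ω F(u_t, ∇u_t)`, the inner deformation of the functional
`A(w) := ∫_Ω F(w, ∇w)`. -/
noncomputable def innerA {N : ℕ} (Ω : Set (Fin N → ℝ)) (F : ℝ × (Fin N → ℝ) → ℝ)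
    (u : (Fin N → ℝ) → ℝ) (Φ : ℝ → (Fin N → ℝ) → (Fin N → ℝ)) (t : ℝ) : ℝ :=
  ∫ y in Ω, F (u (Function.invFun (Φ t) y),
      grad (fun z => u (Function.invFun (Φ t) z)) y)

/-- `t ↦ A(u + tφ) = ∫_Ω F(u + tφ, ∇u + t∇φ)`, the outer deformation of the functional
`A(w) := ∫_Ω F(w, ∇w)`. -/
noncomputable def gateauxA {N : ℕ} (Ω : Set (Fin N → ℝ)) (F : ℝ × (Fin N → ℝ) → ℝ)
    (u φ : (Fin N → ℝ) → ℝ) (t : ℝ) : ℝ :=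
  ∫ x in Ω, F (u x + t * φ x, fun i => pdv u i x + t * pdv φ i x)

/-- The matrix `M_t(x)` with entries `δ_{ij} + t ∂η^i/∂x_j + (t²/2) ∂W^i/∂x_j`. -/
noncomputable def defMat {N : ℕ} (η W : (Fin N → ℝ) → (Fin N → ℝ)) (t : ℝ)
    (x : Fin N → ℝ) : Matrix (Fin N) (Fin N) ℝ :=
  Matrix.of fun i j =>
    (if i = j then (1 : ℝ) else 0) + t * pdv (fun z => η z i) j x
      + (t ^ 2 / 2) * pdv (fun z => W z i) j x

/-- `Φ(a) := ∫_0^a |s² − 1| ds`. -/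
noncomputable def PhiAC (a : ℝ) : ℝ := ∫ s in (0 : ℝ)..a, |s ^ 2 - 1|

/-- All partial derivatives (= iterated Fréchet derivatives) of `f` up to order `n` are
bounded; the case `i = 0` says `f` itself is bounded. -/
def BddUpTo {N : ℕ} {E : Type*} [NormedAddCommGroup E] [NormedSpace ℝ E]
    (n : ℕ) (f : (Fin N → ℝ) → E) : Prop :=
  ∀ i : ℕ, i ≤ n → ∃ C : ℝ, ∀ x, ‖iteratedFDeriv ℝ i f x‖ ≤ C

open Function Set
open scoped NNReal

section ParametricIntegral

variable {Y G : Type*} [TopologicalSpace Y] [T2Space Y] [MeasurableSpace Y] [BorelSpace Y]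
  {μ : Measure Y} [IsFiniteMeasureOnCompacts μ]
  [NormedAddCommGroup G] {T : Set ℝ} {K s : Set Y} {t : ℝ}

theorem integrableOn_slice_of_continuousOn_prod {g : ℝ × Y → G} (hK : IsCompact K) (hs : s ⊆ K)
    (hg : ContinuousOn g (T ×ˢ K)) (ht : t ∈ T) : IntegrableOn (fun y => g (t, y)) s μ := by
  have hslice : ContinuousOn (fun y => g (t, y)) K := hg.comp (by fun_prop) fun y hy => ⟨ht, hy⟩
  exact (hslice.integrableOn_compact hK).mono_set hs

variable [NormedSpace ℝ G]

theorem hasDerivAt_setIntegral_of_subset_isCompact {g g' : ℝ × Y → G} (hT : IsOpen T)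
    (hK : IsCompact K) (hs : s ⊆ K) (hg : ContinuousOn g (T ×ˢ K))
    (hg' : ContinuousOn g' (T ×ˢ K))
    (hderiv : ∀ r ∈ T, ∀ y ∈ K, HasDerivAt (fun r => g (r, y)) (g' (r, y)) r) (ht : t ∈ T) :
    HasDerivAt (fun r => ∫ y in s, g (r, y) ∂μ) (∫ y in s, g' (t, y) ∂μ) t := by
  have ae_mem : ∀ᵐ y ∂μ.restrict s, y ∈ K :=
    ae_mono (Measure.restrict_mono_set μ hs) (ae_restrict_mem hK.measurableSet)
  obtain ⟨ε, hε, hball⟩ := Metric.nhds_basis_closedBall.mem_iff.1 (hT.mem_nhds ht)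
  obtain ⟨C, hC⟩ := ((isCompact_closedBall t ε).prod hK).exists_bound_of_continuousOn
    (hg'.mono (prod_mono_left hball))
  refine (hasDerivAt_integral_of_dominated_loc_of_deriv_le (F := fun r y => g (r, y))
    (F' := fun r y => g' (r, y)) (bound := fun _ => C) (Metric.closedBall_mem_nhds t hε)
    ?_ (integrableOn_slice_of_continuousOn_prod hK hs hg ht)
    (integrableOn_slice_of_continuousOn_prod hK hs hg' ht).aestronglyMeasurable ?_ ?_ ?_).2
  · filter_upwards [hT.mem_nhds ht] with r hr
    exact (integrableOn_slice_of_continuousOn_prod hK hs hg hr).aestronglyMeasurable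
  · filter_upwards [ae_mem] with y hy r hr
    exact hC (r, y) ⟨hr, hy⟩
  · exact integrableOn_const ((measure_mono hs).trans_lt hK.measure_lt_top).ne
  · filter_upwards [ae_mem] with y hy r hr
    exact hderiv r (hball hr) y hy

variable {V : Type*} [NormedAddCommGroup V] [NormedSpace ℝ V]

theorem hasDerivAt_setIntegral_comp {F : V → G} {w w₁ : ℝ × Y → V} (hF : ContDiff ℝ 1 F)
    (hT : IsOpen T) (hK : IsCompact K) (hs : s ⊆ K) (hw : ContinuousOn w (T ×ˢ K))
    (hw₁ : ContinuousOn w₁ (T ×ˢ K))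
    (hderiv : ∀ r ∈ T, ∀ y ∈ K, HasDerivAt (fun r => w (r, y)) (w₁ (r, y)) r) (ht : t ∈ T) :
    HasDerivAt (fun r => ∫ y in s, F (w (r, y)) ∂μ)
      (∫ y in s, fderiv ℝ F (w (t, y)) (w₁ (t, y)) ∂μ) t := by
  have hDF : Continuous (fderiv ℝ F) := hF.continuous_fderiv one_ne_zero
  refine hasDerivAt_setIntegral_of_subset_isCompact (g := fun p => F (w p))
    (g' := fun p => fderiv ℝ F (w p) (w₁ p)) hT hK hs (hF.continuous.comp_continuousOn hw)
    ((hDF.comp_continuousOn hw).clm_apply hw₁) (fun r hr y hy => ?_) ht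
  exact (hF.differentiable one_ne_zero _).hasFDerivAt.comp_hasDerivAt r (hderiv r hr y hy)

theorem hasDerivAt_deriv_setIntegral_comp {F : V → G} {w w₁ w₂ : ℝ × Y → V}
    (hF : ContDiff ℝ 2 F) (hT : IsOpen T) (hK : IsCompact K) (hs : s ⊆ K)
    (hw : ContinuousOn w (T ×ˢ K)) (hw₁ : ContinuousOn w₁ (T ×ˢ K))
    (hw₂ : ContinuousOn w₂ (T ×ˢ K))
    (hderiv : ∀ r ∈ T, ∀ y ∈ K, HasDerivAt (fun r => w (r, y)) (w₁ (r, y)) r)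
    (hderiv₁ : ∀ r ∈ T, ∀ y ∈ K, HasDerivAt (fun r => w₁ (r, y)) (w₂ (r, y)) r) (ht : t ∈ T) :
    HasDerivAt (deriv fun r => ∫ y in s, F (w (r, y)) ∂μ)
      (∫ y in s, fderiv ℝ (fderiv ℝ F) (w (t, y)) (w₁ (t, y)) (w₁ (t, y)) ∂μ
        + ∫ y in s, fderiv ℝ F (w (t, y)) (w₂ (t, y)) ∂μ) t := by
  have hDF : ContDiff ℝ 1 (fderiv ℝ F) := hF.fderiv_right (by norm_num)
  have hquad : ContinuousOn (fun p => fderiv ℝ (fderiv ℝ F) (w p) (w₁ p) (w₁ p)) (T ×ˢ K) :=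
    (((hDF.continuous_fderiv one_ne_zero).comp_continuousOn hw).clm_apply hw₁).clm_apply hw₁
  have hlin {w' : ℝ × Y → V} (hw' : ContinuousOn w' (T ×ˢ K)) :
      ContinuousOn (fun p => fderiv ℝ F (w p) (w' p)) (T ×ˢ K) :=
    (hDF.continuous.comp_continuousOn hw).clm_apply hw'
  have hfirst : (deriv fun r => ∫ y in s, F (w (r, y)) ∂μ)
      =ᶠ[𝓝 t] fun r => ∫ y in s, fderiv ℝ F (w (r, y)) (w₁ (r, y)) ∂μ := by
    filter_upwards [hT.mem_nhds ht] with r hr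
    exact (hasDerivAt_setIntegral_comp (hF.of_le one_le_two) hT hK hs hw hw₁ hderiv hr).deriv
  rw [← integral_add (integrableOn_slice_of_continuousOn_prod hK hs hquad ht)
    (integrableOn_slice_of_continuousOn_prod hK hs (hlin hw₂) ht)]
  refine (hasDerivAt_setIntegral_of_subset_isCompact hT hK hs (hlin hw₁) (hquad.add (hlin hw₂))
    (fun r hr y hy => ?_) ht).congr_of_eventuallyEq hfirst
  exact ((hDF.differentiable one_ne_zero _).hasFDerivAt.comp_hasDerivAt r
    (hderiv r hr y hy)).clm_apply (hderiv₁ r hr y hy)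

end ParametricIntegral

section SecondDerivatives

variable {E G : Type*} [NormedAddCommGroup E] [NormedSpace ℝ E]
  [NormedAddCommGroup G] [NormedSpace ℝ G]

theorem hasDerivAt_add_smul (x a : E) (t : ℝ) : HasDerivAt (fun t : ℝ => x + t • a) a t := by
  simpa using ((hasDerivAt_id t).smul_const a).const_add x

theorem differentiableAt_fderiv_of_contDiffAt_two {f : E → G} {x : E} (hf : ContDiffAt ℝ 2 f x) :
    DifferentiableAt ℝ (fderiv ℝ f) x :=
  (hf.fderiv_right (m := 1) (by norm_num)).differentiableAt one_ne_zero

theorem fderiv_fderiv_apply_const {f : E → G} {x : E} (hf : ContDiffAt ℝ 2 f x) (a b : E) :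
    fderiv ℝ (fun z => fderiv ℝ f z a) x b = fderiv ℝ (fderiv ℝ f) x b a := by
  rw [fderiv_clm_apply (differentiableAt_fderiv_of_contDiffAt_two hf)
    (differentiableAt_const a)]
  simp

theorem fderiv_eq_zero_and_fderiv_fderiv_add_eq_zero_of_const_on_parabola {f : E → G}
    {c a b : E} {k : G} (hf : ContDiffAt ℝ 2 f c)
    (hconst : ∀ᶠ s : ℝ in 𝓝 0, f (c + s • a + (s ^ 2 / 2) • b) = k) :
    fderiv ℝ f c a = 0 ∧ fderiv ℝ (fderiv ℝ f) c a a + fderiv ℝ f c b = 0 := by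
  set γ : ℝ → E := fun s => c + s • a + (s ^ 2 / 2) • b
  have hγ0 : γ 0 = c := by simp [γ]
  have hγ (s : ℝ) : HasDerivAt γ (a + s • b) s := by
    have hsq : HasDerivAt (fun s : ℝ => s ^ 2 / 2) s s := by
      simpa using (hasDerivAt_pow 2 s).div_const 2
    exact (hasDerivAt_add_smul c a s).add (hsq.smul_const b)
  have hγ_tendsto : Tendsto γ (𝓝 0) (𝓝 c) := hγ0 ▸ (hγ 0).continuousAt
  have hvelocity : ∀ᶠ s in 𝓝 0, fderiv ℝ f (γ s) (a + s • b) = 0 := by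
    filter_upwards [hconst.eventually_nhds, hγ_tendsto.eventually (hf.eventually (by simp))]
      with s hs hfs
    exact ((hfs.differentiableAt two_ne_zero).hasFDerivAt.comp_hasDerivAt s (hγ s)).unique
      ((hasDerivAt_const s k).congr_of_eventuallyEq hs)
  have hDf : HasDerivAt (fun s => fderiv ℝ f (γ s)) (fderiv ℝ (fderiv ℝ f) c a) 0 := by
    have h := (differentiableAt_fderiv_of_contDiffAt_two hf).hasFDerivAt
    simpa [comp_def] using h.comp_hasDerivAt_of_eq 0 (hγ 0) hγ0.symm
  constructor
  · simpa [hγ0] using hvelocity.self_of_nhds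
  · simpa [hγ0] using (hDf.clm_apply (hasDerivAt_add_smul a b 0)).unique
      ((hasDerivAt_const 0 0).congr_of_eventuallyEq hvelocity)

end SecondDerivatives

section Slices

variable {E G : Type*} [NormedAddCommGroup E] [NormedSpace ℝ E]
  [NormedAddCommGroup G] [NormedSpace ℝ G] {v : ℝ × E → G} {t : ℝ} {y : E}

/-- The time derivative `∂ₜv` of a path `t ↦ v(t, ·)` of functions, given as one function `v` of
the pair `(t, y)`. -/
noncomputable def timeDeriv (v : ℝ × E → G) (p : ℝ × E) : G :=
  fderiv ℝ v p (1, 0)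

theorem hasDerivAt_timeDeriv (hv : DifferentiableAt ℝ v (t, y)) :
    HasDerivAt (fun s => v (s, y)) (timeDeriv v (t, y)) t :=
  HasFDerivAt.comp_hasDerivAt t hv.hasFDerivAt
    ((hasDerivAt_id t).prodMk (hasDerivAt_const t y))

theorem contDiffAt_timeDeriv {m n : WithTop ℕ∞} {p : ℝ × E} (hv : ContDiffAt ℝ n v p)
    (hmn : m + 1 ≤ n) : ContDiffAt ℝ m (timeDeriv v) p :=
  (hv.fderiv_right hmn).clm_apply contDiffAt_const

theorem contDiffOn_timeDeriv {m n : WithTop ℕ∞} {U : Set (ℝ × E)} (hU : IsOpen U)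
    (hv : ContDiffOn ℝ n v U) (hmn : m + 1 ≤ n) : ContDiffOn ℝ m (timeDeriv v) U :=
  (hv.fderiv_of_isOpen hU hmn).clm_apply contDiffOn_const

theorem contDiff_slice {n : WithTop ℕ∞} {T : Set ℝ} (hv : ContDiffOn ℝ n v (T ×ˢ univ))
    (ht : t ∈ T) : ContDiff ℝ n fun y => v (t, y) :=
  contDiffOn_univ.1 <| hv.comp (by fun_prop) fun y _ => ⟨ht, mem_univ y⟩

theorem fderiv_slice_apply (hv : DifferentiableAt ℝ v (t, y)) (ξ : E) :
    fderiv ℝ (fun z => v (t, z)) y ξ = fderiv ℝ v (t, y) (0, ξ) := by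
  have h := hv.hasFDerivAt.comp y (hasFDerivAt_prodMk_right t y)
  exact congrArg (· ξ) h.fderiv

theorem fderiv_fderiv_slice_apply (hv : ContDiffAt ℝ 2 v (t, y)) (a : E) :
    fderiv ℝ (fderiv ℝ fun z => v (t, z)) y a a
      = fderiv ℝ (fderiv ℝ v) (t, y) (0, a) (0, a) := by
  have hslice : ContDiffAt ℝ 2 (fun z => v (t, z)) y := hv.comp y (by fun_prop)
  have hnear : ∀ᶠ z in 𝓝 y, ContDiffAt ℝ 2 v (t, z) :=
    (Continuous.tendsto (by fun_prop : Continuous fun z : E => (t, z)) y).eventually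
      (hv.eventually (by simp))
  have hdir : (fun z => fderiv ℝ (fun z => v (t, z)) z a)
      =ᶠ[𝓝 y] fun z => fderiv ℝ v (t, z) (0, a) := by
    filter_upwards [hnear] with z hz
    exact fderiv_slice_apply (hz.differentiableAt two_ne_zero) a
  have hdiff : DifferentiableAt ℝ (fun q => fderiv ℝ v q (0, a)) (t, y) :=
    (differentiableAt_fderiv_of_contDiffAt_two hv).clm_apply (differentiableAt_const _)
  rw [← fderiv_fderiv_apply_const hslice, hdir.fderiv_eq, ← fderiv_fderiv_apply_const hv]
  exact fderiv_slice_apply (v := fun q => fderiv ℝ v q (0, a)) hdiff a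

theorem fderiv_fderiv_apply_one_prodMk (hv : ContDiffAt ℝ 2 v (t, y)) (a : E) :
    fderiv ℝ (fderiv ℝ v) (t, y) (1, a) (1, a)
      = timeDeriv (timeDeriv v) (t, y)
        + (2 : ℝ) • fderiv ℝ (fun z => timeDeriv v (t, z)) y a
        + fderiv ℝ (fderiv ℝ fun z => v (t, z)) y a a := by
  have htt : timeDeriv (timeDeriv v) (t, y) = fderiv ℝ (fderiv ℝ v) (t, y) (1, 0) (1, 0) :=
    fderiv_fderiv_apply_const hv _ _
  have htx : fderiv ℝ (fun z => timeDeriv v (t, z)) y a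
      = fderiv ℝ (fderiv ℝ v) (t, y) (0, a) (1, 0) := by
    rw [fderiv_slice_apply ((contDiffAt_timeDeriv (m := 1) hv (by norm_num)).differentiableAt
      one_ne_zero)]
    exact fderiv_fderiv_apply_const hv _ _
  have hsymm : fderiv ℝ (fderiv ℝ v) (t, y) (1, 0) (0, a)
      = fderiv ℝ (fderiv ℝ v) (t, y) (0, a) (1, 0) :=
    (hv.isSymmSndFDerivAt (by simp)).eq _ _
  have hsplit : ((1 : ℝ), a) = (1, 0) + (0, a) := by simp
  rw [htt, htx, fderiv_fderiv_slice_apply hv, hsplit]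
  simp only [map_add, add_apply, hsymm, two_smul]
  abel

end Slices

section InverseFamily

variable {P E G : Type*} [NormedAddCommGroup P] [NormedSpace ℝ P] [CompleteSpace P]
  [NormedAddCommGroup E] [NormedSpace ℝ E] [CompleteSpace E]
  [NormedAddCommGroup G] [NormedSpace ℝ G] [CompleteSpace G] {n : WithTop ℕ∞}

theorem contDiffAt_invFun_of_eventually_injective {f : P × E → G} {p : P} {x : E} (hn : n ≠ 0)
    (hf : ContDiffAt ℝ n f (p, x))
    (hf' : (fderiv ℝ (fun z => f (p, z)) x).IsInvertible)
    (hinj : ∀ᶠ q in 𝓝 p, Injective fun z => f (q, z)) :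
    ContDiffAt ℝ n (fun q : P × G => invFun (fun z => f (q.1, z)) q.2) (p, f (p, x)) := by
  -- Solve `f (q, z) - y = 0` for `z` as a function of the pair `(q, y)`.
  set h : (P × G) × E → G := fun w => f (w.1.1, w.2) - w.1.2
  set c : (P × G) × E := ((p, f (p, x)), x)
  have hc : h c = 0 := sub_self _
  have hh : ContDiffAt ℝ n h c :=
    (ContDiffAt.comp (g := f) c hf (by fun_prop)).sub (by fun_prop)
  have hh' : (fderiv ℝ h c ∘L .inr ℝ (P × G) E).IsInvertible := by
    have hpartial := (hh.differentiableAt hn).hasFDerivAt.comp x (hasFDerivAt_prodMk_right c.1 x)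
    rw [← hpartial.fderiv]
    change (fderiv ℝ (fun z => f (p, z) - f (p, x)) x).IsInvertible
    rwa [fderiv_sub_const]
  refine (hh.contDiffAt_implicitFunction hn hh').congr_of_eventuallyEq ?_
  filter_upwards [hh.eventually_apply_implicitFunction hn hh',
    continuous_fst.continuousAt.eventually hinj] with q hq hq_inj
  have hroot : f (q.1, hh.implicitFunction hn hh' q) = q.2 := sub_eq_zero.1 (hq.trans hc)
  rw [← hroot]
  exact leftInverse_invFun hq_inj _

theorem bijective_id_add_of_lipschitzWith {g : E → E} {c : ℝ≥0} (hg : LipschitzWith c g)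
    (hc : c < 1) : Bijective fun x => x + g x := by
  have happrox : ApproximatesLinearOn (fun x => x + g x)
      (ContinuousLinearEquiv.refl ℝ E : E →L[ℝ] E) univ c := by
    rw [ApproximatesLinearOn.approximatesLinearOn_iff_lipschitzOnWith, lipschitzOnWith_univ]
    convert hg using 1
    ext x
    simp
  rcases subsingleton_or_nontrivial E with hE | hE
  · exact ⟨injective_of_subsingleton _, surjective_to_subsingleton _⟩
  · exact (happrox.toHomeomorph _ (.inr (by simpa using hc))).bijective

theorem isInvertible_fderiv_id_add_of_lipschitzWith {g : E → E} {c : ℝ≥0} {x : E}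
    (hg : LipschitzWith c g) (hc : c < 1) (hgx : DifferentiableAt ℝ g x) :
    (fderiv ℝ (fun x => x + g x) x).IsInvertible := by
  have hnorm : ‖-fderiv ℝ g x‖ < 1 := by
    rw [norm_neg]
    exact (norm_fderiv_le_of_lipschitz ℝ hg).trans_lt hc
  have hunit : IsUnit (fderiv ℝ (fun x => x + g x) x) := by
    have h := (hasFDerivAt_id x).add hgx.hasFDerivAt
    rw [show fderiv ℝ (fun x => x + g x) x = _ from h.fderiv]
    have hone := isUnit_one_sub_of_norm_lt_one hnorm
    rw [sub_neg_eq_add] at hone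
    exact hone
  exact ⟨ContinuousLinearEquiv.unitsEquiv ℝ E hunit.unit, rfl⟩

theorem contDiffOn_invFun_id_add {g : P × E → E} {c : P → ℝ≥0} (hn : n ≠ 0)
    (hg : ContDiff ℝ n g) (hc : Continuous c)
    (hlip : ∀ p, LipschitzWith (c p) fun x => g (p, x)) :
    ContDiffOn ℝ n (fun q : P × E => invFun (fun x => x + g (q.1, x)) q.2)
      ({p | c p < 1} ×ˢ univ) := by
  rintro ⟨p, y⟩ ⟨hp : c p < 1, -⟩
  obtain ⟨x, rfl⟩ := (bijective_id_add_of_lipschitzWith (hlip p) hp).surjective y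
  have hinj : ∀ᶠ q in 𝓝 p, Injective fun x => x + g (q, x) := by
    filter_upwards [(isOpen_lt hc continuous_const).mem_nhds hp] with q hq
    exact (bijective_id_add_of_lipschitzWith (hlip q) hq).injective
  have hgp : DifferentiableAt ℝ (fun x => g (p, x)) x :=
    ((hg.comp (by fun_prop : ContDiff ℝ n fun x : E => (p, x))).differentiable hn) x
  exact (contDiffAt_invFun_of_eventually_injective (f := fun q => q.2 + g q) hn
    (contDiff_snd.add hg).contDiffAt
    (isInvertible_fderiv_id_add_of_lipschitzWith (hlip p) hp hgp) hinj).contDiffWithinAt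

end InverseFamily

section Deformation

variable {E : Type*} [NormedAddCommGroup E] [NormedSpace ℝ E]

/-- The deformation `Φ_t(x) = x + t·η(x) + (t²/2)·ζ(x)` with velocity `η` and acceleration `ζ`,
bracketed as a perturbation of the identity. -/
noncomputable def deformation (η ζ : E → E) (t : ℝ) (x : E) : E :=
  x + (t • η x + (t ^ 2 / 2) • ζ x)

theorem deformation_zero (η ζ : E → E) : deformation η ζ 0 = id := by
  ext x
  simp [deformation]

/-- A Lipschitz constant of `Φ_t - id`, when `K` and `L` are Lipschitz constants of the velocity
and the acceleration of the deformation `Φ_t`. -/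
noncomputable def perturbationConst (K L : ℝ≥0) (t : ℝ) : ℝ≥0 :=
  ‖t‖₊ * K + ‖t ^ 2 / 2‖₊ * L

theorem continuous_perturbationConst (K L : ℝ≥0) : Continuous (perturbationConst K L) := by
  unfold perturbationConst
  fun_prop

theorem perturbationConst_zero (K L : ℝ≥0) : perturbationConst K L 0 = 0 := by
  simp [perturbationConst]

theorem lipschitzWith_perturbationConst {η ζ : E → E} {K L : ℝ≥0} (hη : LipschitzWith K η)
    (hζ : LipschitzWith L ζ) (t : ℝ) :
    LipschitzWith (perturbationConst K L t) fun x => t • η x + (t ^ 2 / 2) • ζ x :=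
  ((lipschitzWith_smul t).comp hη).add ((lipschitzWith_smul (t ^ 2 / 2)).comp hζ)

/-- The transported path `v(t, y) = u(Φ_t⁻¹(y))`; it equals the `u_t` of the inner variation as
long as `Φ_t` is a bijection. -/
noncomputable def transport {G : Type*} (u : E → G) (η ζ : E → E) (p : ℝ × E) : G :=
  u (invFun (deformation η ζ p.1) p.2)

theorem transport_deformation {G : Type*} (u : E → G) {η ζ : E → E} {t : ℝ}
    (hinj : Injective (deformation η ζ t)) (x : E) :
    transport u η ζ (t, deformation η ζ t x) = u x :=
  congrArg u (leftInverse_invFun hinj x)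

theorem transport_zero {G : Type*} (u : E → G) (η ζ : E → E) :
    (fun y => transport u η ζ (0, y)) = u := by
  ext y
  simpa [deformation_zero] using transport_deformation u (η := η) (ζ := ζ) (t := 0)
    (by simp [deformation_zero, injective_id]) y

theorem injective_deformation [CompleteSpace E] {η ζ : E → E} {K L : ℝ≥0} {t : ℝ}
    (hη : LipschitzWith K η) (hζ : LipschitzWith L ζ) (ht : perturbationConst K L t < 1) :
    Injective (deformation η ζ t) :=
  (bijective_id_add_of_lipschitzWith (lipschitzWith_perturbationConst hη hζ t) ht).injective

variable {G : Type*} [NormedAddCommGroup G] [NormedSpace ℝ G]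

theorem contDiffOn_transport [CompleteSpace E] {u : E → G} {η ζ : E → E} {K L : ℝ≥0}
    {n : WithTop ℕ∞} (hn : n ≠ 0) (hu : ContDiff ℝ n u) (hη : ContDiff ℝ n η)
    (hζ : ContDiff ℝ n ζ) (hηL : LipschitzWith K η) (hζL : LipschitzWith L ζ) :
    ContDiffOn ℝ n (transport u η ζ) ({t | perturbationConst K L t < 1} ×ˢ univ) := by
  have hg : ContDiff ℝ n fun q : ℝ × E => q.1 • η q.2 + (q.1 ^ 2 / 2) • ζ q.2 := by fun_prop
  exact hu.comp_contDiffOn (contDiffOn_invFun_id_add hn hg (continuous_perturbationConst K L)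
    (lipschitzWith_perturbationConst hηL hζL))

variable {u : E → G} {η ζ : E → E}

theorem fderiv_transport_eq_zero_and_fderiv_fderiv_add_eq_zero {x : E}
    (hv : ContDiffAt ℝ 2 (transport u η ζ) (0, x))
    (hinj : ∀ᶠ t in 𝓝 0, Injective (deformation η ζ t)) :
    fderiv ℝ (transport u η ζ) (0, x) (1, η x) = 0 ∧
      fderiv ℝ (fderiv ℝ (transport u η ζ)) (0, x) (1, η x) (1, η x)
        + fderiv ℝ (transport u η ζ) (0, x) (0, ζ x) = 0 := by
  refine fderiv_eq_zero_and_fderiv_fderiv_add_eq_zero_of_const_on_parabola (k := u x) hv ?_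
  filter_upwards [hinj] with t ht
  refine Eq.trans ?_ (transport_deformation u ht x)
  simp [deformation, add_assoc]

theorem timeDeriv_transport_zero {x : E} (hv : ContDiffAt ℝ 2 (transport u η ζ) (0, x))
    (hinj : ∀ᶠ t in 𝓝 0, Injective (deformation η ζ t)) :
    timeDeriv (transport u η ζ) (0, x) = -fderiv ℝ u x (η x) := by
  have h := (fderiv_transport_eq_zero_and_fderiv_fderiv_add_eq_zero hv hinj).1
  have hsplit : ((1 : ℝ), η x) = (1, 0) + (0, η x) := by simp
  rw [hsplit, map_add, ← fderiv_slice_apply (hv.differentiableAt two_ne_zero),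
    transport_zero] at h
  exact eq_neg_of_add_eq_zero_left h

theorem timeDeriv_timeDeriv_transport_zero {x : E}
    (hv : ∀ y, ContDiffAt ℝ 2 (transport u η ζ) (0, y))
    (hinj : ∀ᶠ t in 𝓝 0, Injective (deformation η ζ t)) (hu : ContDiffAt ℝ 2 u x)
    (hη : DifferentiableAt ℝ η x) :
    timeDeriv (timeDeriv (transport u η ζ)) (0, x)
      = fderiv ℝ (fderiv ℝ u) x (η x) (η x)
        + ((2 : ℝ) • fderiv ℝ u x (fderiv ℝ η x (η x)) - fderiv ℝ u x (ζ x)) := by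
  have hφ : fderiv ℝ (fun y => timeDeriv (transport u η ζ) (0, y)) x (η x)
      = -(fderiv ℝ (fderiv ℝ u) x (η x) (η x) + fderiv ℝ u x (fderiv ℝ η x (η x))) := by
    rw [funext fun y => timeDeriv_transport_zero (hv y) hinj, fderiv_fun_neg,
      fderiv_clm_apply (differentiableAt_fderiv_of_contDiffAt_two hu) hη]
    simp [add_comm]
  have h := (fderiv_transport_eq_zero_and_fderiv_fderiv_add_eq_zero (hv x) hinj).2
  rw [fderiv_fderiv_apply_one_prodMk (hv x),
    ← fderiv_slice_apply ((hv x).differentiableAt two_ne_zero), hφ, transport_zero] at h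
  rw [← sub_eq_zero, ← h]
  module

end Deformation

section Jets

variable {N : ℕ}

/-- The 1-jet `(w, ∇w)` at which the integrand `F` of the functional `A` is evaluated. -/
noncomputable def jet (w : (Fin N → ℝ) → ℝ) (x : Fin N → ℝ) : ℝ × (Fin N → ℝ) :=
  (w x, grad w x)

theorem continuous_jet {w : (Fin N → ℝ) → ℝ} (hw : ContDiff ℝ 1 w) : Continuous (jet w) :=
  hw.continuous.prodMk <| continuous_pi fun _ =>
    (hw.continuous_fderiv one_ne_zero).clm_apply continuous_const

theorem jet_slice {v : ℝ × (Fin N → ℝ) → ℝ} {p : ℝ × (Fin N → ℝ)}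
    (hv : DifferentiableAt ℝ v p) :
    jet (fun z => v (p.1, z)) p.2 = (v p, fun i => fderiv ℝ v p (0, Pi.single i 1)) :=
  Prod.ext rfl <| funext fun i => fderiv_slice_apply hv (Pi.single i 1)

theorem continuousOn_jet_slice {v : ℝ × (Fin N → ℝ) → ℝ} {U : Set (ℝ × (Fin N → ℝ))}
    (hU : IsOpen U) (hv : ContDiffOn ℝ 1 v U) :
    ContinuousOn (fun p => jet (fun z => v (p.1, z)) p.2) U := by
  have hDv : ContinuousOn (fderiv ℝ v) U := hv.continuousOn_fderiv_of_isOpen hU le_rfl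
  have hjet : ContinuousOn
      (fun p => (v p, fun i => fderiv ℝ v p ((0 : ℝ), (Pi.single i 1 : Fin N → ℝ)))) U :=
    hv.continuousOn.prodMk <| continuousOn_pi.2 fun _ => hDv.clm_apply continuousOn_const
  exact hjet.congr fun p hp =>
    jet_slice ((hv.contDiffAt (hU.mem_nhds hp)).differentiableAt one_ne_zero)

theorem hasDerivAt_jet_slice {v : ℝ × (Fin N → ℝ) → ℝ} {t : ℝ} {y : Fin N → ℝ}
    (hv : ContDiffAt ℝ 2 v (t, y)) :
    HasDerivAt (fun s => jet (fun z => v (s, z)) y) (jet (fun z => timeDeriv v (t, z)) y) t := by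
  have hdiff : ∀ᶠ s in 𝓝 t, DifferentiableAt ℝ v (s, y) := by
    filter_upwards [(Continuous.tendsto (by fun_prop : Continuous fun s : ℝ => (s, y)) t).eventually
      (hv.eventually (by simp))] with s hs
    exact hs.differentiableAt two_ne_zero
  have hgrad (a : Fin N → ℝ) : HasDerivAt (fun s => fderiv ℝ v (s, y) (0, a))
      (fderiv ℝ (timeDeriv v) (t, y) (0, a)) t := by
    have h := hasDerivAt_timeDeriv (v := fun q => fderiv ℝ v q (0, a)) (t := t) (y := y)
      ((differentiableAt_fderiv_of_contDiffAt_two hv).clm_apply (differentiableAt_const _))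
    have hcomm : timeDeriv (fun q => fderiv ℝ v q (0, a)) (t, y)
        = fderiv ℝ (timeDeriv v) (t, y) (0, a) := by
      unfold timeDeriv
      rw [fderiv_fderiv_apply_const hv, fderiv_fderiv_apply_const hv,
        (hv.isSymmSndFDerivAt (by simp)).eq]
    rwa [hcomm] at h
  have htime := (contDiffAt_timeDeriv (m := 1) hv (by norm_num)).differentiableAt one_ne_zero
  rw [jet_slice (p := (t, y)) htime]
  refine HasDerivAt.congr_of_eventuallyEq ?_ (hdiff.mono fun s hs => jet_slice (p := (s, y)) hs)
  exact (hasDerivAt_timeDeriv (hv.differentiableAt two_ne_zero)).prodMk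
    (hasDerivAt_pi.2 fun i => hgrad _)

end Jets

section Variations

variable {N : ℕ} {Ω : Set (Fin N → ℝ)} {F : ℝ × (Fin N → ℝ) → ℝ}

/-- The functional `A(w) = ∫_Ω F(w, ∇w)`. -/
noncomputable def energy (Ω : Set (Fin N → ℝ)) (F : ℝ × (Fin N → ℝ) → ℝ)
    (w : (Fin N → ℝ) → ℝ) : ℝ :=
  ∫ y in Ω, F (jet w y)

theorem innerA_deformation (u : (Fin N → ℝ) → ℝ) (η ζ : (Fin N → ℝ) → (Fin N → ℝ)) :
    innerA Ω F u (deformation η ζ) = fun t => energy Ω F fun y => transport u η ζ (t, y) :=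
  rfl

section Gateaux

variable {u φ : (Fin N → ℝ) → ℝ}

theorem gateauxA_eq_integral_jet_add_smul :
    gateauxA Ω F u φ = fun t => ∫ y in Ω, F (jet u y + t • jet φ y) :=
  rfl

theorem hasDerivAt_gateauxA (hΩ : Bornology.IsBounded Ω) (hF : ContDiff ℝ 1 F)
    (hu : ContDiff ℝ 1 u) (hφ : ContDiff ℝ 1 φ) :
    HasDerivAt (gateauxA Ω F u φ) (∫ y in Ω, fderiv ℝ F (jet u y) (jet φ y)) 0 := by
  have hju := continuous_jet hu
  have hjφ := continuous_jet hφ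
  have h := hasDerivAt_setIntegral_comp (μ := volume) (t := 0)
    (w := fun p => jet u p.2 + p.1 • jet φ p.2) (w₁ := fun p => jet φ p.2) hF isOpen_univ
    hΩ.isCompact_closure subset_closure (by fun_prop) (by fun_prop)
    (fun t _ y _ => hasDerivAt_add_smul (jet u y) (jet φ y) t) (mem_univ _)
  simpa [gateauxA_eq_integral_jet_add_smul] using h

theorem hasDerivAt_deriv_gateauxA (hΩ : Bornology.IsBounded Ω) (hF : ContDiff ℝ 2 F)
    (hu : ContDiff ℝ 1 u) (hφ : ContDiff ℝ 1 φ) :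
    HasDerivAt (deriv (gateauxA Ω F u φ))
      (∫ y in Ω, fderiv ℝ (fderiv ℝ F) (jet u y) (jet φ y) (jet φ y)) 0 := by
  have hju := continuous_jet hu
  have hjφ := continuous_jet hφ
  have h := hasDerivAt_deriv_setIntegral_comp (μ := volume) (t := 0)
    (w := fun p => jet u p.2 + p.1 • jet φ p.2) (w₁ := fun p => jet φ p.2) (w₂ := fun _ => 0)
    hF isOpen_univ hΩ.isCompact_closure subset_closure (by fun_prop) (by fun_prop)
    continuousOn_const (fun t _ y _ => hasDerivAt_add_smul (jet u y) (jet φ y) t)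
    (fun t _ y _ => hasDerivAt_const t (jet φ y)) (mem_univ _)
  simpa [gateauxA_eq_integral_jet_add_smul] using h

end Gateaux

section Path

variable {v : ℝ × (Fin N → ℝ) → ℝ} {T : Set ℝ}

theorem hasDerivAt_energy_path (hΩ : Bornology.IsBounded Ω) (hF : ContDiff ℝ 1 F)
    (hT : IsOpen T) (hv : ContDiffOn ℝ 2 v (T ×ˢ univ)) {t : ℝ} (ht : t ∈ T) :
    HasDerivAt (fun t => energy Ω F fun y => v (t, y))
      (∫ y in Ω, fderiv ℝ F (jet (fun z => v (t, z)) y)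
        (jet (fun z => timeDeriv v (t, z)) y)) t := by
  have hU : IsOpen (T ×ˢ (univ : Set (Fin N → ℝ))) := hT.prod isOpen_univ
  have hsub : T ×ˢ closure Ω ⊆ T ×ˢ univ := prod_mono_right (subset_univ _)
  exact hasDerivAt_setIntegral_comp (μ := volume) (w := fun p => jet (fun z => v (p.1, z)) p.2)
    (w₁ := fun p => jet (fun z => timeDeriv v (p.1, z)) p.2) hF hT hΩ.isCompact_closure
    subset_closure ((continuousOn_jet_slice hU (hv.of_le one_le_two)).mono hsub)
    ((continuousOn_jet_slice hU (contDiffOn_timeDeriv hU hv (by norm_num))).mono hsub)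
    (fun r hr y _ => hasDerivAt_jet_slice (hv.contDiffAt (hU.mem_nhds ⟨hr, mem_univ y⟩))) ht

theorem hasDerivAt_deriv_energy_path (hΩ : Bornology.IsBounded Ω) (hF : ContDiff ℝ 2 F)
    (hT : IsOpen T) (hv : ContDiffOn ℝ 3 v (T ×ˢ univ)) {t : ℝ} (ht : t ∈ T) :
    HasDerivAt (deriv fun t => energy Ω F fun y => v (t, y))
      ((∫ y in Ω, fderiv ℝ (fderiv ℝ F) (jet (fun z => v (t, z)) y)
          (jet (fun z => timeDeriv v (t, z)) y) (jet (fun z => timeDeriv v (t, z)) y))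
        + ∫ y in Ω, fderiv ℝ F (jet (fun z => v (t, z)) y)
          (jet (fun z => timeDeriv (timeDeriv v) (t, z)) y)) t := by
  have hU : IsOpen (T ×ˢ (univ : Set (Fin N → ℝ))) := hT.prod isOpen_univ
  have hsub : T ×ˢ closure Ω ⊆ T ×ˢ univ := prod_mono_right (subset_univ _)
  have hv₁ : ContDiffOn ℝ 2 (timeDeriv v) (T ×ˢ univ) :=
    contDiffOn_timeDeriv hU hv (by norm_num)
  have hv₂ : ContDiffOn ℝ 1 (timeDeriv (timeDeriv v)) (T ×ˢ univ) :=
    contDiffOn_timeDeriv hU hv₁ (by norm_num)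
  have hmem {r : ℝ} (hr : r ∈ T) (y : Fin N → ℝ) : T ×ˢ univ ∈ 𝓝 (r, y) :=
    hU.mem_nhds ⟨hr, mem_univ y⟩
  exact hasDerivAt_deriv_setIntegral_comp (μ := volume)
    (w := fun p => jet (fun z => v (p.1, z)) p.2)
    (w₁ := fun p => jet (fun z => timeDeriv v (p.1, z)) p.2)
    (w₂ := fun p => jet (fun z => timeDeriv (timeDeriv v) (p.1, z)) p.2) hF hT
    hΩ.isCompact_closure subset_closure
    ((continuousOn_jet_slice hU (hv.of_le (by norm_num))).mono hsub)
    ((continuousOn_jet_slice hU (hv₁.of_le one_le_two)).mono hsub)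
    ((continuousOn_jet_slice hU hv₂).mono hsub)
    (fun r hr y _ => hasDerivAt_jet_slice ((hv.of_le (by norm_num)).contDiffAt (hmem hr y)))
    (fun r hr y _ => hasDerivAt_jet_slice (hv₁.contDiffAt (hmem hr y))) ht

theorem deriv_energy_path (hΩ : Bornology.IsBounded Ω) (hF : ContDiff ℝ 1 F) (hT : IsOpen T)
    (hT0 : 0 ∈ T) (hv : ContDiffOn ℝ 2 v (T ×ˢ univ)) :
    deriv (fun t => energy Ω F fun y => v (t, y)) 0
      = deriv (gateauxA Ω F (fun y => v (0, y)) fun y => timeDeriv v (0, y)) 0 := by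
  have hv₁ : ContDiffOn ℝ 1 (timeDeriv v) (T ×ˢ univ) :=
    contDiffOn_timeDeriv (hT.prod isOpen_univ) hv (by norm_num)
  rw [(hasDerivAt_energy_path hΩ hF hT hv hT0).deriv,
    (hasDerivAt_gateauxA hΩ hF ((contDiff_slice hv hT0).of_le one_le_two)
      (contDiff_slice hv₁ hT0)).deriv]

theorem deriv_deriv_energy_path (hΩ : Bornology.IsBounded Ω) (hF : ContDiff ℝ 2 F)
    (hT : IsOpen T) (hT0 : 0 ∈ T) (hv : ContDiffOn ℝ 3 v (T ×ˢ univ)) :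
    deriv (deriv fun t => energy Ω F fun y => v (t, y)) 0
      = deriv (deriv (gateauxA Ω F (fun y => v (0, y)) fun y => timeDeriv v (0, y))) 0
        + deriv (gateauxA Ω F (fun y => v (0, y)) fun y => timeDeriv (timeDeriv v) (0, y)) 0 := by
  have hU : IsOpen (T ×ˢ (univ : Set (Fin N → ℝ))) := hT.prod isOpen_univ
  have hv₁ : ContDiffOn ℝ 2 (timeDeriv v) (T ×ˢ univ) :=
    contDiffOn_timeDeriv hU hv (by norm_num)
  have hv₂ : ContDiffOn ℝ 1 (timeDeriv (timeDeriv v)) (T ×ˢ univ) :=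
    contDiffOn_timeDeriv hU hv₁ (by norm_num)
  have hs₀ : ContDiff ℝ 1 fun y => v (0, y) := (contDiff_slice hv hT0).of_le (by norm_num)
  have hs₁ : ContDiff ℝ 1 fun y => timeDeriv v (0, y) :=
    (contDiff_slice hv₁ hT0).of_le one_le_two
  rw [(hasDerivAt_deriv_energy_path hΩ hF hT hv hT0).deriv,
    (hasDerivAt_deriv_gateauxA hΩ hF hs₀ hs₁).deriv,
    (hasDerivAt_gateauxA hΩ (hF.of_le one_le_two) hs₀ (contDiff_slice hv₂ hT0)).deriv]

end Path

end Variations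

section Coordinates

variable {N : ℕ} {u : (Fin N → ℝ) → ℝ} {η ζ : (Fin N → ℝ) → (Fin N → ℝ)} {x : Fin N → ℝ}

theorem sum_pdv_mul (f : (Fin N → ℝ) → ℝ) (x c : Fin N → ℝ) :
    ∑ i, pdv f i x * c i = fderiv ℝ f x c := by
  conv_rhs => rw [← Finset.univ_sum_single c, map_sum]
  refine Finset.sum_congr rfl fun i _ => ?_
  rw [pdv, mul_comm, ← smul_eq_mul, ← map_smul, ← Pi.single_smul, smul_eq_mul, mul_one]

theorem nGradDot_apply : nGradDot u η x = -fderiv ℝ u x (η x) := by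
  rw [nGradDot, sum_pdv_mul]

theorem advf_eq_fderiv_apply (hη : DifferentiableAt ℝ η x) :
    advf η x = fderiv ℝ η x (η x) := by
  ext i
  simp only [advf, mul_comm (η x _), sum_pdv_mul]
  exact congrArg (· (η x)) (hasFDerivAt_pi'.1 hη.hasFDerivAt i).fderiv

theorem sum_sum_pdv_pdv_mul_mul (hu : ContDiffAt ℝ 2 u x) (c : Fin N → ℝ) :
    ∑ i, ∑ j, pdv (pdv u i) j x * c i * c j = fderiv ℝ (fderiv ℝ u) x c c := by
  have hinner (i : Fin N) : ∑ j, pdv (pdv u i) j x * c i * c j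
      = pdv (fun z => fderiv ℝ u z c) i x * c i := by
    have hsymm : fderiv ℝ (pdv u i) x c = pdv (fun z => fderiv ℝ u z c) i x := by
      unfold pdv
      rw [fderiv_fderiv_apply_const hu, fderiv_fderiv_apply_const hu,
        (hu.isSymmSndFDerivAt (by simp)).eq]
    rw [← hsymm, ← sum_pdv_mul, Finset.sum_mul]
    simp only [mul_right_comm]
  simp only [hinner, sum_pdv_mul, fderiv_fderiv_apply_const hu]

theorem X0_apply (hu : ContDiffAt ℝ 2 u x) (hη : DifferentiableAt ℝ η x) :
    X0 u η ζ x = fderiv ℝ (fderiv ℝ u) x (η x) (η x)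
      + ((2 : ℝ) • fderiv ℝ u x (fderiv ℝ η x (η x)) - fderiv ℝ u x (ζ x)) := by
  have hfield : (fun i => 2 * advf η x i - ζ x i)
      = (2 : ℝ) • fderiv ℝ η x (η x) - ζ x := by
    rw [← advf_eq_fderiv_apply hη]
    rfl
  rw [X0, sum_sum_pdv_pdv_mul_mul hu, sum_pdv_mul u x fun i => 2 * advf η x i - ζ x i, hfield,
    map_sub, map_smul]

end Coordinates

theorem exists_lipschitzWith_of_bddUpTo {N n : ℕ} {E : Type*} [NormedAddCommGroup E]
    [NormedSpace ℝ E] {f : (Fin N → ℝ) → E} (hn : 1 ≤ n) (hf : Differentiable ℝ f)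
    (hfb : BddUpTo n f) : ∃ K, LipschitzWith K f := by
  obtain ⟨C, hC⟩ := hfb 1 hn
  refine ⟨C.toNNReal, lipschitzWith_of_nnnorm_fderiv_le hf fun x => ?_⟩
  rw [← norm_toNNReal, ← norm_iteratedFDeriv_one]
  exact Real.toNNReal_le_toNNReal (hC x)

theorem inner_variations_eq_gateaux_variations_general {N : ℕ} {Ω : Set (Fin N → ℝ)}
    (hΩ : Bornology.IsBounded Ω) {F : ℝ × (Fin N → ℝ) → ℝ} (hF : ContDiff ℝ 2 F)
    {u : (Fin N → ℝ) → ℝ} (hu : ContDiff ℝ 3 u) {η ζ : (Fin N → ℝ) → (Fin N → ℝ)}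
    (hη : ContDiff ℝ 3 η) (hζ : ContDiff ℝ 3 ζ) {K L : ℝ≥0} (hηL : LipschitzWith K η)
    (hζL : LipschitzWith L ζ) {Φ : ℝ → (Fin N → ℝ) → (Fin N → ℝ)}
    (hΦ : ∀ t x, Φ t x = x + t • η x + (t ^ 2 / 2) • ζ x) :
    deriv (innerA Ω F u Φ) 0 = deriv (gateauxA Ω F u (nGradDot u η)) 0 ∧
    deriv (deriv (innerA Ω F u Φ)) 0
      = deriv (deriv (gateauxA Ω F u (nGradDot u η))) 0
        + deriv (gateauxA Ω F u (X0 u η ζ)) 0 := by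
  obtain rfl : Φ = deformation η ζ := by
    ext1 t
    ext1 x
    rw [hΦ, add_assoc, deformation]
  set T : Set ℝ := {t | perturbationConst K L t < 1}
  have hT : IsOpen T := isOpen_lt (continuous_perturbationConst K L) continuous_const
  have hT0 : (0 : ℝ) ∈ T := (perturbationConst_zero K L).trans_lt one_pos
  have hinj : ∀ᶠ t in 𝓝 0, Injective (deformation η ζ t) :=
    (hT.eventually_mem hT0).mono fun t ht => injective_deformation hηL hζL ht
  have hv : ContDiffOn ℝ 3 (transport u η ζ) (T ×ˢ univ) :=
    contDiffOn_transport three_ne_zero hu hη hζ hηL hζL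
  have hv₂ : ContDiffOn ℝ 2 (transport u η ζ) (T ×ˢ univ) := hv.of_le (by norm_num)
  have hv₀ (y : Fin N → ℝ) : ContDiffAt ℝ 2 (transport u η ζ) (0, y) :=
    hv₂.contDiffAt ((hT.prod isOpen_univ).mem_nhds ⟨hT0, mem_univ y⟩)
  have hvelocity : (fun y => timeDeriv (transport u η ζ) (0, y)) = nGradDot u η := by
    ext y
    rw [timeDeriv_transport_zero (hv₀ y) hinj, nGradDot_apply]
  have hacceleration :
      (fun y => timeDeriv (timeDeriv (transport u η ζ)) (0, y)) = X0 u η ζ := by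
    ext y
    have huy : ContDiffAt ℝ 2 u y := hu.contDiffAt.of_le (by norm_num)
    have hηy : DifferentiableAt ℝ η y := hη.differentiable three_ne_zero y
    rw [timeDeriv_timeDeriv_transport_zero hv₀ hinj huy hηy, X0_apply huy hηy]
  rw [innerA_deformation, deriv_energy_path hΩ (hF.of_le one_le_two) hT hT0 hv₂,
    deriv_deriv_energy_path hΩ hF hT hT0 hv, transport_zero, hvelocity, hacceleration]
  exact ⟨rfl, rfl⟩

/-- Relation between inner and Gateaux variations:
`𝔄₁'(0) = dA(u, −∇u·η)` and `𝔄₁''(0) = d²A(u, −∇u·η) + dA(u, X₀)`. -/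
theorem inner_variations_eq_gateaux_variations
    (N : ℕ) (Ω : Set (Fin N → ℝ)) (hΩo : IsOpen Ω) (hΩb : Bornology.IsBounded Ω)
    (F : ℝ × (Fin N → ℝ) → ℝ) (hF : ContDiff ℝ 3 F)
    (u : (Fin N → ℝ) → ℝ) (hu : ContDiff ℝ 3 u) (hub : BddUpTo 3 u)
    (η ζ : (Fin N → ℝ) → (Fin N → ℝ))
    (hη : ContDiff ℝ 3 η) (hηb : BddUpTo 3 η)
    (hζ : ContDiff ℝ 3 ζ) (hζb : BddUpTo 3 ζ)
    (Φ : ℝ → (Fin N → ℝ) → (Fin N → ℝ))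
    (hΦ : ∀ t x, Φ t x = x + t • η x + (t ^ 2 / 2) • ζ x)
    (τ : ℝ) (hτ : 0 < τ)
    (hbij : ∀ t : ℝ, |t| < τ → Function.Bijective (Φ t)) :
    deriv (innerA Ω F u Φ) 0 = deriv (gateauxA Ω F u (nGradDot u η)) 0 ∧
    deriv (deriv (innerA Ω F u Φ)) 0
      = deriv (deriv (gateauxA Ω F u (nGradDot u η))) 0
        + deriv (gateauxA Ω F u (X0 u η ζ)) 0 := by
  obtain ⟨K, hηL⟩ :=
    exists_lipschitzWith_of_bddUpTo (by norm_num) (hη.differentiable three_ne_zero) hηb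
  obtain ⟨L, hζL⟩ :=
    exists_lipschitzWith_of_bddUpTo (by norm_num) (hζ.differentiable three_ne_zero) hζb
  exact inner_variations_eq_gateaux_variations_general hΩb (hF.of_le (by norm_num)) hu hη hζ
    hηL hζL hΦ

end PaperAC
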